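/- arXiv:1609.01724 — 7 statements merged into one kernel-verified Lean document; each statement's English description precedes it below -/
import Mathlib

section
/- Let ε > 0, let θ : (0,ε) → ℝ be twice continuously differentiable, let V : (0,ε) → ℝ be locally integrable, and let κ ≥ 0. Assume that for all t ∈ (0,ε), θ'(t)² + θ''(t) + V(t) ≥ 3/(4t²) − κ/t. Then for every smooth u : (0,ε) → ℂ with compact support contained in (0,ε), ∫₀^ε ( |u'(t)|² + V(t)|u(t)|² ) e^{2θ(t)} dt ≥ ∫₀^ε ( 1/t² − κ/t ) |u(t)|² e^{2θ(t)} dt. -/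
open MeasureTheory Set

/-- One-dimensional weak Hardy inequality with effective potential
`V_eff = (θ')² + θ''`: if `V_eff + V ≥ 3/(4t²) − κ/t` on `(0,ε)`, then the weighted
Schrödinger form is bounded below by the Hardy-type weight `1/t² − κ/t`. -/
theorem stmt_1 (ε : ℝ) (hε : 0 < ε) (θ : ℝ → ℝ)
    (hθ : ContDiffOn ℝ 2 θ (Ioo 0 ε))
    (V : ℝ → ℝ) (hV : LocallyIntegrableOn V (Ioo 0 ε))
    (κ : ℝ) (hκ : 0 ≤ κ)
    (hbound : ∀ t ∈ Ioo 0 ε,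
      3 / (4 * t ^ 2) - κ / t ≤ deriv θ t ^ 2 + deriv (deriv θ) t + V t)
    (u : ℝ → ℂ) (hu : ContDiff ℝ (⊤ : ℕ∞) u) (hcs : HasCompactSupport u)
    (hsupp : tsupport u ⊆ Ioo 0 ε) :
    ∫ t in Ioo 0 ε, (1 / t ^ 2 - κ / t) * ‖u t‖ ^ 2 * Real.exp (2 * θ t) ≤
      ∫ t in Ioo 0 ε, (‖deriv u t‖ ^ 2 + V t * ‖u t‖ ^ 2) * Real.exp (2 * θ t) := by
  have hopen : IsOpen (Ioo (0:ℝ) ε) := isOpen_Ioo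
  have hu1 : ContDiff ℝ 1 u := hu.of_le (by exact_mod_cast le_top)
  have hθ' : ContDiffOn ℝ 1 (deriv θ) (Ioo 0 ε) :=
    hθ.deriv_of_isOpen hopen (by norm_num)
  have hθat : ∀ t ∈ Ioo 0 ε, ContDiffAt ℝ 1 θ t := fun t ht =>
    (hθ.contDiffAt (hopen.mem_nhds ht)).of_le (by norm_num)
  have hθ'at : ∀ t ∈ Ioo 0 ε, ContDiffAt ℝ 1 (deriv θ) t := fun t ht =>
    hθ'.contDiffAt (hopen.mem_nhds ht)
  have hN : ContDiff ℝ 1 (fun t => ‖u t‖ ^ 2) := hu1.norm_sq ℝ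
  have hE : ∀ t ∈ Ioo 0 ε, ContDiffAt ℝ 1 (fun t => Real.exp (2 * θ t)) t := fun t ht =>
    (contDiffAt_const.mul (hθat t ht)).exp
  have key : ∀ p : ℝ → ℝ, (∀ t ∈ Ioo 0 ε, ContDiffAt ℝ 1 p t) →
      ContDiff ℝ 1 (fun t => p t * ‖u t‖ ^ 2 * Real.exp (2 * θ t)) ∧
      HasCompactSupport (fun t => p t * ‖u t‖ ^ 2 * Real.exp (2 * θ t)) := by
    intro p hp
    have hs : Function.support (fun t => p t * ‖u t‖ ^ 2 * Real.exp (2 * θ t)) ⊆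
        Function.support u := by
      intro t ht h0
      apply ht
      simp [h0]
    refine ⟨?_, hcs.mono hs⟩
    rw [contDiff_iff_contDiffAt]
    intro t
    by_cases ht : t ∈ tsupport (fun t => p t * ‖u t‖ ^ 2 * Real.exp (2 * θ t))
    swap
    · exact (contDiffAt_const (c := (0:ℝ))).congr_of_eventuallyEq
        (notMem_tsupport_iff_eventuallyEq.1 ht)
    have ht' := hsupp (closure_mono hs ht)
    exact ((hp t ht').mul hN.contDiffAt).mul (hE t ht')
  have hne : ∀ t ∈ Ioo 0 ε, t ≠ 0 := fun t ht => ht.1.ne'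
  have hinv : ∀ t ∈ Ioo 0 ε, ContDiffAt ℝ 1 (fun t : ℝ => t⁻¹) t := fun t ht =>
    contDiffAt_inv ℝ (hne t ht)
  obtain ⟨hL, hLc⟩ := key (fun t => 1 / t ^ 2 - κ / t) (by
    intro t ht
    have h3 : (fun t : ℝ => 1 / t ^ 2 - κ / t) = fun t => t⁻¹ ^ 2 - κ * t⁻¹ := by
      funext t
      rw [one_div, inv_pow, div_eq_mul_inv]
    rw [h3]
    exact ((hinv t ht).pow 2).sub (contDiffAt_const.mul (hinv t ht)))
  obtain ⟨hF, hFc⟩ := key (fun t => deriv θ t - (1/2) * t⁻¹) (by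
    intro t ht
    exact (hθ'at t ht).sub (contDiffAt_const.mul (hinv t ht)))
  obtain ⟨hW, hWc⟩ := key (fun _ => 1) (fun _ _ => contDiffAt_const)
  set F : ℝ → ℝ := fun t => (deriv θ t - (1/2) * t⁻¹) * ‖u t‖ ^ 2 * Real.exp (2 * θ t) with hFdef
  have hF'i : Integrable (deriv F) :=
    (hF.continuous_deriv le_rfl).integrable_of_hasCompactSupport hFc.deriv
  have hFi : Integrable F := hF.continuous.integrable_of_hasCompactSupport hFc
  have hLi := hL.continuous.integrable_of_hasCompactSupport hLc (μ := volume)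
  have hFR : ∫ t, deriv F t = 0 :=
    integral_eq_zero_of_hasDerivAt_of_integrable
      (fun t => (hF.differentiable (by norm_num) t).hasDerivAt) hF'i hFi
  have hFs : ∫ t in Ioo 0 ε, deriv F t = 0 := by
    rw [setIntegral_eq_integral_of_forall_compl_eq_zero, hFR]
    intro t ht
    by_contra h
    apply ht
    apply hsupp
    have h1 : t ∈ tsupport F := support_deriv_subset h
    refine closure_mono ?_ h1
    intro s hs h0
    apply hs
    simp [hFdef, h0]
  have hK : IsCompact (tsupport u) := hcs
  have hUi : Integrable (fun t => ‖deriv u t‖ ^ 2 * Real.exp (2 * θ t)) := by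
    have hs : Function.support (fun t => ‖deriv u t‖ ^ 2 * Real.exp (2 * θ t)) ⊆
        Function.support (deriv u) := by
      intro t ht h0
      apply ht
      simp [h0]
    refine Continuous.integrable_of_hasCompactSupport ?_ (hcs.deriv.mono hs)
    apply continuous_of_tsupport
    intro t ht
    have ht' := hsupp (closure_minimal support_deriv_subset (isClosed_tsupport u)
      (closure_mono hs ht))
    exact (((hu1.continuous_deriv le_rfl).norm.pow 2).continuousAt).mul (hE t ht').continuousAt
  have hVi : Integrable (fun t => V t * (1 * ‖u t‖ ^ 2 * Real.exp (2 * θ t))) := by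
    have h1 : IntegrableOn V (tsupport u) := hV.integrableOn_compact_subset hsupp hK
    have h2 := h1.mul_continuousOn hW.continuous.continuousOn hK
    refine (integrableOn_iff_integrable_of_support_subset ?_).1 h2
    intro t ht
    apply subset_tsupport
    intro h0
    apply ht
    simp [h0]
  have hRi : Integrable (fun t => (‖deriv u t‖ ^ 2 + V t * ‖u t‖ ^ 2) * Real.exp (2 * θ t)) := by
    refine (hUi.add hVi).congr (Filter.Eventually.of_forall fun t => ?_)
    simp only [Pi.add_apply]
    ring
  have hmono : ∫ t in Ioo 0 ε, ((1 / t ^ 2 - κ / t) * ‖u t‖ ^ 2 * Real.exp (2 * θ t) - deriv F t) ≤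
      ∫ t in Ioo 0 ε, (‖deriv u t‖ ^ 2 + V t * ‖u t‖ ^ 2) * Real.exp (2 * θ t) := by
    refine setIntegral_mono_on (hLi.sub hF'i).integrableOn hRi.integrableOn measurableSet_Ioo ?_
    intro t ht
    have ht0 := hne t ht
    have d1 : HasDerivAt θ (deriv θ t) t := ((hθat t ht).differentiableAt (by norm_num)).hasDerivAt
    have d2 : HasDerivAt (deriv θ) (deriv (deriv θ) t) t :=
      ((hθ'at t ht).differentiableAt (by norm_num)).hasDerivAt
    have d3 : HasDerivAt u (deriv u t) t := (hu1.differentiable (by norm_num) t).hasDerivAt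
    have d4 := ((d2.sub ((hasDerivAt_inv ht0).const_mul (1/2))).mul d3.norm_sq).mul
      ((d1.const_mul 2).exp)
    have d5 := d4.deriv
    change deriv F t = _ at d5
    rw [d5]
    simp only [Pi.sub_apply, Pi.mul_apply]
    have hb := hbound t ht
    have hsq := norm_add_sq_real (deriv u t) ((deriv θ t - (1/2) * t⁻¹) • u t)
    rw [norm_smul, mul_pow, Real.norm_eq_abs, sq_abs, inner_smul_right,
      real_inner_comm] at hsq
    have hpos := sq_nonneg ‖deriv u t + (deriv θ t - (1/2) * t⁻¹) • u t‖
    rw [hsq] at hpos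
    have hb' : 3 / 4 * t⁻¹ ^ 2 - κ * t⁻¹ ≤ deriv θ t ^ 2 + deriv (deriv θ) t + V t := by
      have e0 : 3 / (4 * t ^ 2) - κ / t = 3 / 4 * t⁻¹ ^ 2 - κ * t⁻¹ := by
        field_simp
      rwa [e0] at hb
    have e1 : 1 / t ^ 2 - κ / t = t⁻¹ ^ 2 - κ * t⁻¹ := by field_simp
    have e2 : -(t ^ 2)⁻¹ = -(t⁻¹ ^ 2) := by rw [inv_pow]
    rw [e1, e2]
    have hm := mul_nonneg (sub_nonneg.2 hb') (sq_nonneg ‖u t‖)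
    have hfin := mul_nonneg (add_nonneg hpos hm) (Real.exp_pos (2 * θ t)).le
    generalize Real.exp (2 * θ t) = E at *
    generalize t⁻¹ = x at *
    linarith
  rw [integral_sub hLi.integrableOn hF'i.integrableOn, hFs, sub_zero] at hmono
  exact hmono
end

section
/- Let a > 1, m ∈ ℝ, ε > 0, and define h(t) = (1/(2t)) · ( (2a+m)(a+1)(t/ε)^a + m(a−1) ) / ( (2a+m)(t/ε)^a − m ) for t > 0 with (2a+m)(t/ε)^a − m ≠ 0. Then at every t ∈ (0,ε] where the denominator is nonzero, h is differentiable and satisfies the backwards Riccati equation h'(t) + h(t)² − (a²−1)/(4t²) = 0; moreover h(ε) = (1+a)/(2ε) + m/(2ε). -/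
/-- The explicit solution of the backwards Riccati Cauchy problem
`h' + h² − (a²−1)/(4t²) = 0`, `h(ε) = (1+a)/(2ε) + m/(2ε)` (quadratic case). -/
noncomputable def riccatiSol (a m ε t : ℝ) : ℝ :=
  (1 / (2 * t)) *
    (((2 * a + m) * (a + 1) * (t / ε) ^ a + m * (a - 1)) /
      ((2 * a + m) * (t / ε) ^ a - m))

/-- At every `t ∈ (0,ε]` where the denominator is nonzero, the explicit
function `h` is differentiable and satisfies `h'(t) + h(t)² − (a²−1)/(4t²) = 0`;
moreover `h(ε) = (1+a)/(2ε) + m/(2ε)`. -/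
theorem stmt_2 (a m ε : ℝ) (ha : 1 < a) (hε : 0 < ε) :
    (∀ t ∈ Set.Ioc 0 ε, (2 * a + m) * (t / ε) ^ a - m ≠ 0 →
      HasDerivAt (riccatiSol a m ε)
        ((a ^ 2 - 1) / (4 * t ^ 2) - riccatiSol a m ε t ^ 2) t) ∧
    riccatiSol a m ε ε = (1 + a) / (2 * ε) + m / (2 * ε) := by
  have hε0 : ε ≠ 0 := hε.ne'
  refine ⟨?_, ?_⟩
  · intro t ht hD
    have ht0 : t ≠ 0 := ht.1.ne'
    have hpos : 0 < t / ε := div_pos ht.1 hε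
    have hu : HasDerivAt (fun s : ℝ => (s / ε) ^ a) (a * (t / ε) ^ a / t) t := by
      have h1 : HasDerivAt (fun s : ℝ => s / ε) (1 / ε) t := (hasDerivAt_id t).div_const ε
      have h2 := h1.rpow_const (p := a) (Or.inl hpos.ne')
      convert h2 using 1
      rw [Real.rpow_sub_one hpos.ne']
      field_simp
    have hN := (hu.const_mul ((2 * a + m) * (a + 1))).add_const (m * (a - 1))
    have hDd := (hu.const_mul (2 * a + m)).sub_const m
    have hi : HasDerivAt (fun s : ℝ => 1 / (2 * s)) (-1 / (2 * t ^ 2)) t := by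
      have h1 := ((hasDerivAt_id t).const_mul 2).fun_inv (by simpa using ht0)
      simp only [id, one_div] at h1 ⊢
      refine h1.congr_deriv ?_
      field_simp
    have h := hi.fun_mul (hN.fun_div hDd hD)
    unfold riccatiSol
    refine h.congr_deriv ?_
    generalize (t / ε) ^ a = u at hD ⊢
    field_simp
    ring
  · unfold riccatiSol
    rw [div_self hε0, Real.one_rpow]
    have h2 : (2 * a + m) * 1 - m ≠ 0 := by
      have : (2 * a + m) * 1 - m = 2 * a := by ring
      rw [this]; positivity
    field_simp
    ring
end

section
/- Let a > 1, m ≤ 0, ε > 0, and let h(t) = (1/(2t)) · ( (2a+m)(a+1)(t/ε)^a + m(a−1) ) / ( (2a+m)(t/ε)^a − m ) on (0,ε]. If m = 0 then t·h(t) → (1+a)/2 as t → 0⁺ (in fact h(t) = (1+a)/(2t) identically), while if m < 0 then t·h(t) → (1−a)/2 as t → 0⁺. In particular h(t) → +∞ as t → 0⁺ when m = 0, and h(t) → −∞ as t → 0⁺ when m < 0. -/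
/-- Asymptotic behavior at `t → 0⁺` of the explicit Riccati solution for
`m ≤ 0`: if `m = 0` then `h(t) = (1+a)/(2t)` and `t·h(t) → (1+a)/2`, while if `m < 0`
then `t·h(t) → (1−a)/2`; in particular `h → +∞` when `m = 0` and `h → −∞` when `m < 0`. -/
theorem stmt_4 (a m ε : ℝ) (ha : 1 < a) (hm : m ≤ 0) (hε : 0 < ε) :
    (m = 0 →
      (∀ t ∈ Set.Ioc 0 ε, riccatiSol a m ε t = (1 + a) / (2 * t)) ∧
      Filter.Tendsto (fun t => t * riccatiSol a m ε t) (nhdsWithin 0 (Set.Ioi 0))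
        (nhds ((1 + a) / 2)) ∧
      Filter.Tendsto (riccatiSol a m ε) (nhdsWithin 0 (Set.Ioi 0)) Filter.atTop) ∧
    (m < 0 →
      Filter.Tendsto (fun t => t * riccatiSol a m ε t) (nhdsWithin 0 (Set.Ioi 0))
        (nhds ((1 - a) / 2)) ∧
      Filter.Tendsto (riccatiSol a m ε) (nhdsWithin 0 (Set.Ioi 0)) Filter.atBot) := by
  have hev : ∀ᶠ t : ℝ in nhdsWithin 0 (Set.Ioi 0), 0 < t := self_mem_nhdsWithin
  have hcancel : (fun t => t⁻¹ * (t * riccatiSol a m ε t)) =ᶠ[nhdsWithin 0 (Set.Ioi 0)]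
      riccatiSol a m ε := by
    filter_upwards [hev] with t ht
    field_simp
  constructor
  · intro h0
    have key : ∀ t : ℝ, 0 < t → riccatiSol a m ε t = (1 + a) / (2 * t) := by
      intro t ht
      have hp : 0 < (t / ε) ^ a := Real.rpow_pos_of_pos (div_pos ht hε) a
      subst h0
      unfold riccatiSol
      generalize (t / ε) ^ a = p at hp
      have : a ≠ 0 := by linarith
      have := hp.ne'
      simp only [add_zero, zero_mul, sub_zero]
      field_simp
      ring
    have hlim : Filter.Tendsto (fun t => t * riccatiSol a m ε t) (nhdsWithin 0 (Set.Ioi 0))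
        (nhds ((1 + a) / 2)) := by
      refine tendsto_const_nhds.congr' ?_
      filter_upwards [hev] with t ht
      rw [key t ht]
      field_simp
    refine ⟨fun t ht => key t ht.1, hlim, ?_⟩
    exact (Filter.Tendsto.atTop_mul_pos (by linarith) tendsto_inv_nhdsGT_zero hlim).congr' hcancel
  · intro h0
    have hp : Filter.Tendsto (fun t : ℝ => (t / ε) ^ a) (nhdsWithin 0 (Set.Ioi 0)) (nhds 0) := by
      have hc : ContinuousAt (fun t : ℝ => (t / ε) ^ a) 0 :=
        (continuousAt_id.div_const ε).rpow_const (Or.inr (by linarith))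
      have := hc.tendsto
      simp only [zero_div, Real.zero_rpow (by linarith : a ≠ 0)] at this
      exact this.mono_left nhdsWithin_le_nhds
    have hlim : Filter.Tendsto (fun t => t * riccatiSol a m ε t) (nhdsWithin 0 (Set.Ioi 0))
        (nhds ((1 - a) / 2)) := by
      have h1 := (((hp.const_mul ((2 * a + m) * (a + 1))).add_const (m * (a - 1))).div
        ((hp.const_mul (2 * a + m)).sub_const m) (by simpa using h0.ne)).const_mul (1 / 2 : ℝ)
      have e : (1 / 2 : ℝ) * (((2 * a + m) * (a + 1) * 0 + m * (a - 1)) / ((2 * a + m) * 0 - m))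
          = (1 - a) / 2 := by
        have := h0.ne
        simp only [mul_zero, zero_add, zero_sub]
        field_simp
        ring
      rw [e] at h1
      refine h1.congr' ?_
      filter_upwards [hev] with t ht
      unfold riccatiSol
      rw [← mul_assoc]
      congr 1
      field_simp
    refine ⟨hlim, ?_⟩
    exact (Filter.Tendsto.atTop_mul_neg (by linarith) tendsto_inv_nhdsGT_zero hlim).congr' hcancel
end

section
/- Let c > 0, r > 2, and set ν = 1/(r−2) and τ(t) = 2ν√c · t^{−1/(2ν)} = (2√c/(r−2)) t^{1−r/2} for t > 0. Let w : (0,∞) → ℝ be twice differentiable, and let t₀ > 0 be such that w satisfies the modified Bessel equation z² w''(z) + z w'(z) − (z² + ν²) w(z) = 0 at z = τ(t₀), and w(τ(t₀)) ≠ 0. Then the function h(t) = 1/(2t) − (√c / t^{r/2}) · w'(τ(t)) / w(τ(t)) is differentiable at t₀ and satisfies h'(t₀) + h(t₀)² − c/t₀^r = 0. -/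
/-- The change of variable `τ(t) = (2√c/(r−2)) t^{1−r/2}` of the super-quadratic case. -/
noncomputable def besselTau (c r t : ℝ) : ℝ :=
  (2 * Real.sqrt c / (r - 2)) * t ^ (1 - r / 2)

/-- The Riccati ansatz `h(t) = 1/(2t) − (√c/t^{r/2}) w'(τ(t))/w(τ(t))`. -/
noncomputable def besselRiccati (c r : ℝ) (w : ℝ → ℝ) (t : ℝ) : ℝ :=
  1 / (2 * t) - Real.sqrt c / t ^ (r / 2) * (deriv w (besselTau c r t) / w (besselTau c r t))

/-- If `w` is twice differentiable on `(0,∞)`, satisfies the modified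
Bessel equation of order `ν = 1/(r−2)` at `z = τ(t₀)`, and `w(τ(t₀)) ≠ 0`, then the
ansatz `h` is differentiable at `t₀` and satisfies `h'(t₀) + h(t₀)² − c/t₀^r = 0`. -/
theorem stmt_5 (c r : ℝ) (hc : 0 < c) (hr : 2 < r) (w : ℝ → ℝ)
    (hw : ∀ z ∈ Set.Ioi (0 : ℝ), DifferentiableAt ℝ w z ∧ DifferentiableAt ℝ (deriv w) z)
    (t₀ : ℝ) (ht₀ : 0 < t₀)
    (hBessel :
      (besselTau c r t₀) ^ 2 * deriv (deriv w) (besselTau c r t₀) +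
        (besselTau c r t₀) * deriv w (besselTau c r t₀) -
        ((besselTau c r t₀) ^ 2 + (1 / (r - 2)) ^ 2) * w (besselTau c r t₀) = 0)
    (hw0 : w (besselTau c r t₀) ≠ 0) :
    HasDerivAt (besselRiccati c r w)
      (c / t₀ ^ r - besselRiccati c r w t₀ ^ 2) t₀ := by
  have hr2 : r - 2 ≠ 0 := by linarith
  have hr2p : 0 < r - 2 := by linarith
  have hs : 0 < Real.sqrt c := Real.sqrt_pos.mpr hc
  have hs2 : Real.sqrt c ^ 2 = c := Real.sq_sqrt hc.le
  have hp : 0 < t₀ ^ (r / 2) := Real.rpow_pos_of_pos ht₀ _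
  have ht : t₀ ≠ 0 := ht₀.ne'
  have hτpos : 0 < besselTau c r t₀ := by
    have := Real.rpow_pos_of_pos ht₀ (1 - r / 2)
    unfold besselTau
    positivity
  obtain ⟨hw1, hw2⟩ := hw _ hτpos
  have hpr : t₀ ^ r = (t₀ ^ (r / 2)) ^ 2 := by
    rw [pow_two, ← Real.rpow_add ht₀]; congr 1; ring
  have hq : t₀ ^ (1 - r / 2) = t₀ / t₀ ^ (r / 2) := by
    rw [Real.rpow_sub ht₀, Real.rpow_one]
  have hτ : besselTau c r t₀ = 2 * t₀ * (Real.sqrt c / t₀ ^ (r / 2)) / (r - 2) := by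
    unfold besselTau; rw [hq]; field_simp
  have hdτ : HasDerivAt (besselTau c r) (-(Real.sqrt c / t₀ ^ (r / 2))) t₀ := by
    have h1 := (Real.hasDerivAt_rpow_const (x := t₀) (p := 1 - r / 2) (Or.inl ht)).const_mul
      (2 * Real.sqrt c / (r - 2))
    refine h1.congr_deriv ?_
    rw [show (1 - r / 2 - 1 : ℝ) = -(r / 2) by ring, Real.rpow_neg ht₀.le]
    field_simp
    ring
  have hdg : HasDerivAt (fun t : ℝ => Real.sqrt c / t ^ (r / 2))
      (-(r / 2) * (Real.sqrt c / t₀ ^ (r / 2)) / t₀) t₀ := by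
    have h1 := (hasDerivAt_const t₀ (Real.sqrt c)).div
      (Real.hasDerivAt_rpow_const (x := t₀) (p := r / 2) (Or.inl ht)) hp.ne'
    refine h1.congr_deriv ?_
    rw [Real.rpow_sub ht₀, Real.rpow_one]
    field_simp
    ring
  have hdi : HasDerivAt (fun t : ℝ => 1 / (2 * t)) (-1 / (2 * t₀ ^ 2)) t₀ := by
    have h1 := (hasDerivAt_const t₀ (1 : ℝ)).div
      ((hasDerivAt_id t₀).const_mul 2) (by simpa using ht)
    refine h1.congr_deriv ?_
    simp only [id]
    field_simp
    ring
  have hda := hw2.hasDerivAt.comp t₀ hdτ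
  have hdb := hw1.hasDerivAt.comp t₀ hdτ
  have hmain := hdi.sub (hdg.mul (hda.div hdb hw0))
  refine HasDerivAt.congr_deriv (f := besselRiccati c r w) hmain ?_
  have hcg : c / t₀ ^ r = (Real.sqrt c / t₀ ^ (r / 2)) ^ 2 := by
    rw [hpr, div_pow, hs2]
  rw [hcg]
  simp only [besselRiccati, Function.comp, Pi.div_apply]
  generalize deriv (deriv w) (besselTau c r t₀) = d at *
  generalize deriv w (besselTau c r t₀) = a at *
  generalize w (besselTau c r t₀) = b at *
  rw [hτ] at hBessel
  have hg : 0 < Real.sqrt c / t₀ ^ (r / 2) := by positivity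
  clear hcg hmain hda hdb hdi hdg hdτ hτ hw1 hw2
  generalize Real.sqrt c / t₀ ^ (r / 2) = g at *
  have hB : 4 * t₀ ^ 2 * g ^ 2 * d + 2 * t₀ * g * (r - 2) * a
      - (4 * t₀ ^ 2 * g ^ 2 + 1) * b = 0 := by
    field_simp at hBessel
    linear_combination hBessel
  field_simp
  linear_combination b * hB
end

section
/- Let κ > 0, C > 0, and define F(τ) = C · (1 − √(1 − κτ)) / (1 + √(1 − κτ)) · e^{2√(1 − κτ)} for 0 < τ < 1/κ. Then F is positive and differentiable on (0, 1/κ), and satisfies F'(τ) = √(1/τ² − κ/τ) · F(τ) for all τ ∈ (0, 1/κ). -/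
/-- The explicit solution `F(τ) = C (1−√(1−κτ))/(1+√(1−κτ)) e^{2√(1−κτ)}` of the ODE
`F' = √(1/τ² − κ/τ) F` used in the Agmon-type estimate. -/
noncomputable def agmonF (κ C τ : ℝ) : ℝ :=
  C * ((1 - Real.sqrt (1 - κ * τ)) / (1 + Real.sqrt (1 - κ * τ))) *
    Real.exp (2 * Real.sqrt (1 - κ * τ))

/-- For `κ > 0`, `C > 0`, the function `F` is positive and differentiable
on `(0, 1/κ)` and satisfies `F'(τ) = √(1/τ² − κ/τ) F(τ)` there. -/
theorem stmt_6 (κ C : ℝ) (hκ : 0 < κ) (hC : 0 < C) :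
    ∀ τ ∈ Set.Ioo 0 (1 / κ),
      0 < agmonF κ C τ ∧
      HasDerivAt (agmonF κ C) (Real.sqrt (1 / τ ^ 2 - κ / τ) * agmonF κ C τ) τ := by
  rintro τ ⟨h0, h1⟩
  have hlt : κ * τ < 1 := by
    rw [lt_div_iff₀ hκ] at h1
    linarith
  have hkt : 0 < κ * τ := mul_pos hκ h0
  have hpos : 0 < 1 - κ * τ := by linarith
  obtain ⟨s, hs⟩ : ∃ s, s = Real.sqrt (1 - κ * τ) := ⟨_, rfl⟩
  have hs0 : 0 < s := by rw [hs]; exact Real.sqrt_pos.mpr hpos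
  have hsq : s ^ 2 = 1 - κ * τ := by rw [hs]; exact Real.sq_sqrt hpos.le
  have hs1 : s < 1 := by nlinarith
  have hroot : Real.sqrt (1 / τ ^ 2 - κ / τ) = s / τ := by
    have : 1 / τ ^ 2 - κ / τ = (s / τ) ^ 2 := by
      rw [div_pow, hsq]
      field_simp
    rw [this, Real.sqrt_sq (by positivity)]
  have hF : agmonF κ C τ = C * ((1 - s) / (1 + s)) * Real.exp (2 * s) := by
    rw [agmonF, hs]
  refine ⟨?_, ?_⟩
  · rw [hF]
    have : 0 < 1 - s := by linarith
    positivity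
  · have hlin : HasDerivAt (fun t : ℝ => 1 - κ * t) (-κ) τ := by
      simpa using ((hasDerivAt_id τ).const_mul κ).const_sub 1
    have hd : HasDerivAt (fun t : ℝ => Real.sqrt (1 - κ * t)) (-κ / (2 * s)) τ := by
      rw [hs]
      exact hlin.sqrt hpos.ne'
    have hne : 1 + Real.sqrt (1 - κ * τ) ≠ 0 := by rw [← hs]; positivity
    have hmain := (((hd.const_sub 1).fun_div (hd.const_add 1) hne).const_mul C).fun_mul
      ((hd.const_mul 2).exp)
    rw [hroot, hF]
    refine HasDerivAt.congr_deriv hmain ?_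
    rw [← hs]
    have hk : κ = (1 - s ^ 2) / τ := by
      rw [hsq]
      field_simp
      ring
    have h2 : 1 + s ≠ 0 := by positivity
    rw [hk]
    field_simp
    ring
end

section
/- Let n ≥ 1, let 0 ≤ t* < ε, and let R, R₁, R₂ : (t*, ε] → (symmetric n×n real matrices) be continuous with R₁(t) ≤ R(t) ≤ R₂(t) in the Loewner (positive semidefinite) order for all t ∈ (t*, ε]. Let H, H₁, H₂ : (t*, ε] → (symmetric n×n real matrices) be differentiable solutions of H' + H² + R = 0, H₁' + H₁² + R₁ = 0, and H₂' + H₂² + R₂ = 0, respectively, on (t*, ε], and assume H₁(ε) ≤ H(ε) ≤ H₂(ε) in the Loewner order. Then H₁(t) ≤ H(t) ≤ H₂(t) for all t ∈ (t*, ε]. -/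
open Matrix Set Filter Topology

theorem aux_quad_cont {n : ℕ} {s : Set ℝ} {M : ℝ → Matrix (Fin n) (Fin n) ℝ}
    (hM : ∀ i j, ContinuousOn (fun t => M t i j) s) (V : Set (Fin n → ℝ)) :
    ContinuousOn (fun p : ℝ × (Fin n → ℝ) => p.2 ⬝ᵥ (M p.1 *ᵥ p.2)) (s ×ˢ V) := by
  simp only [dotProduct, mulVec]
  refine continuousOn_finsetSum _ fun i _ => ContinuousOn.mul (by fun_prop) ?_
  refine continuousOn_finsetSum _ fun j _ => ContinuousOn.mul ?_ (by fun_prop)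
  exact (hM i j).comp continuousOn_fst (fun p hp => hp.1)

theorem aux_quad_deriv {n : ℕ} {s : Set ℝ} {t : ℝ} {M : ℝ → Matrix (Fin n) (Fin n) ℝ}
    {M' : Matrix (Fin n) (Fin n) ℝ}
    (hM : ∀ i j, HasDerivWithinAt (fun t => M t i j) (M' i j) s t) (v : Fin n → ℝ) :
    HasDerivWithinAt (fun t => v ⬝ᵥ (M t *ᵥ v)) (v ⬝ᵥ (M' *ᵥ v)) s t := by
  simp only [dotProduct, mulVec]
  refine HasDerivWithinAt.fun_sum fun i _ => HasDerivWithinAt.const_mul _ ?_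
  exact HasDerivWithinAt.fun_sum fun j _ => HasDerivWithinAt.mul_const (hM i j) _

theorem aux_unit_compact (n : ℕ) : IsCompact {v : Fin n → ℝ | v ⬝ᵥ v = 1} := by
  refine Metric.isCompact_of_isClosed_isBounded ?_ ?_
  · refine isClosed_eq ?_ continuous_const
    simp only [dotProduct]; fun_prop
  · refine (Metric.isBounded_closedBall (x := (0 : Fin n → ℝ)) (r := 1)).subset ?_
    intro v hv
    rw [mem_closedBall_zero_iff, pi_norm_le_iff_of_nonneg zero_le_one]
    intro i
    have h1 : v i * v i ≤ 1 := by
      rw [← (hv : v ⬝ᵥ v = 1)]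
      exact Finset.single_le_sum (f := fun i => v i * v i)
        (fun j _ => mul_self_nonneg (v j)) (Finset.mem_univ i)
    rw [Real.norm_eq_abs]
    exact abs_le_one_iff_mul_self_le_one.mpr h1

theorem aux_psd_of_unit {n : ℕ} {M : Matrix (Fin n) (Fin n) ℝ} (hM : M.IsSymm)
    (h : ∀ v : Fin n → ℝ, v ⬝ᵥ v = 1 → 0 ≤ v ⬝ᵥ (M *ᵥ v)) : M.PosSemidef := by
  refine Matrix.PosSemidef.of_dotProduct_mulVec_nonneg ?_ fun w => ?_
  · rw [Matrix.IsHermitian, conjTranspose_eq_transpose_of_trivial]; exact hM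
  · rw [star_trivial]
    by_cases hw : w = 0
    · simp [hw]
    have hpos : 0 < w ⬝ᵥ w := by
      have h0 : 0 ≤ w ⬝ᵥ w := Finset.sum_nonneg fun i _ => mul_self_nonneg _
      exact lt_of_le_of_ne h0 fun h => hw (dotProduct_self_eq_zero.mp h.symm)
    set c := Real.sqrt (w ⬝ᵥ w) with hc
    have hcpos : 0 < c := Real.sqrt_pos.mpr hpos
    have hcc : c * c = w ⬝ᵥ w := Real.mul_self_sqrt hpos.le
    have := h (c⁻¹ • w) (by
      simp only [smul_dotProduct, dotProduct_smul, smul_eq_mul, ← hcc]; field_simp)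
    simp only [mulVec_smul, smul_dotProduct, dotProduct_smul, smul_eq_mul] at this
    have hi : 0 < c⁻¹ := inv_pos.mpr hcpos
    exact nonneg_of_mul_nonneg_right (nonneg_of_mul_nonneg_right this hi) hi

theorem aux_core {n : ℕ} {a b : ℝ} (hab : a ≤ b) {D S P : ℝ → Matrix (Fin n) (Fin n) ℝ}
    (hDs : ∀ t ∈ Icc a b, (D t).IsSymm)
    (hP : ∀ t ∈ Icc a b, (P t).PosSemidef)
    (hS : ∀ i j, ContinuousOn (fun t => S t i j) (Icc a b))
    (hD : ∀ t ∈ Icc a b, ∀ i j, HasDerivWithinAt (fun s => D s i j)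
      ((-(S t * D t + D t * S t + P t)) i j) (Icc a b) t)
    (hb : (D b).PosSemidef) : (D a).PosSemidef := by
  have hcpt : IsCompact (Icc a b ×ˢ {v : Fin n → ℝ | v ⬝ᵥ v = 1}) :=
    isCompact_Icc.prod (aux_unit_compact n)
  obtain ⟨C, hC⟩ := (hcpt.image_of_continuousOn (aux_quad_cont hS _)).bddAbove
  have hC' : ∀ t ∈ Icc a b, ∀ v : Fin n → ℝ, v ⬝ᵥ v = 1 → v ⬝ᵥ (S t *ᵥ v) ≤ C :=
    fun t ht v hv => hC ⟨(t, v), ⟨ht, hv⟩, rfl⟩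
  have hDc : ∀ i j, ContinuousOn (fun t => D t i j) (Icc a b) :=
    fun i j t ht => (hD t ht i j).continuousWithinAt
  set K := 2 * C + 1 with hK
  have key : ∀ δ > 0, ∀ v : Fin n → ℝ, v ⬝ᵥ v = 1 →
      0 < v ⬝ᵥ (D a *ᵥ v) + δ * Real.exp (K * (b - a)) := by
    intro δ hδ
    by_contra! hcon
    obtain ⟨v0, hv0, hv0'⟩ := hcon
    set g : ℝ → ℝ := fun t => δ * Real.exp (K * (b - t)) with hg
    have hgpos : ∀ t, 0 < g t := fun t => mul_pos hδ (Real.exp_pos _)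
    have hgd : ∀ t, HasDerivAt g (-(K * g t)) t := by
      intro t
      have h1 : HasDerivAt (fun t => K * (b - t)) (K * (-1)) t :=
        ((hasDerivAt_id t).const_sub b).const_mul K
      have := (h1.exp).const_mul δ
      refine this.congr_deriv ?_
      simp only [hg]; ring
    have hgc : Continuous g := by simp only [hg]; fun_prop
    set q : ℝ × (Fin n → ℝ) → ℝ := fun p => p.2 ⬝ᵥ (D p.1 *ᵥ p.2) + g p.1 with hq
    have hqc : ContinuousOn q (Icc a b ×ˢ {v : Fin n → ℝ | v ⬝ᵥ v = 1}) :=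
      (aux_quad_cont hDc _).add (hgc.comp continuous_fst).continuousOn
    set B := (Icc a b ×ˢ {v : Fin n → ℝ | v ⬝ᵥ v = 1}) ∩ q ⁻¹' Iic 0 with hB
    have hBc : IsCompact B := by
      refine hcpt.of_isClosed_subset ?_ inter_subset_left
      exact hqc.preimage_isClosed_of_isClosed hcpt.isClosed isClosed_Iic
    obtain ⟨⟨t, v⟩, ⟨⟨ht, hv⟩, hqtv⟩, hmax⟩ := hBc.exists_isMaxOn
      ⟨(a, v0), ⟨⟨left_mem_Icc.mpr hab, hv0⟩, hv0'⟩⟩ continuous_fst.continuousOn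
    simp only at ht hv
    have hv1 : v ⬝ᵥ v = 1 := hv
    have hqtv' : v ⬝ᵥ (D t *ᵥ v) + g t ≤ 0 := hqtv
    have htb : t < b := by
      refine lt_of_le_of_ne ht.2 ?_
      rintro rfl
      have := hb.dotProduct_mulVec_nonneg v
      rw [star_trivial] at this
      linarith [hgpos t]
    have hpos : ∀ s ∈ Ioo t b, ∀ w : Fin n → ℝ, w ⬝ᵥ w = 1 → 0 < w ⬝ᵥ (D s *ᵥ w) + g s := by
      intro s hs w hw
      by_contra! hc
      have : s ≤ t := hmax (a := (s, w)) ⟨⟨⟨ht.1.trans hs.1.le, hs.2.le⟩, hw⟩, hc⟩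
      exact absurd hs.1 (not_lt.mpr this)
    have hsub : Ioo t b ⊆ Icc a b := fun s hs => ⟨ht.1.trans hs.1.le, hs.2.le⟩
    have hderiv : ∀ w : Fin n → ℝ, HasDerivWithinAt (fun s => w ⬝ᵥ (D s *ᵥ w) + g s)
        (w ⬝ᵥ ((-(S t * D t + D t * S t + P t)) *ᵥ w) + -(K * g t)) (Ioo t b) t := fun w =>
      ((aux_quad_deriv (hD t ht) w).mono hsub).add (hgd t).hasDerivWithinAt
    have hne : (𝓝[Ioo t b] t).NeBot := left_nhdsWithin_Ioo_neBot htb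
    have hE : (D t + g t • (1 : Matrix (Fin n) (Fin n) ℝ)).PosSemidef := by
      refine aux_psd_of_unit ((hDs t ht).add (by simp [Matrix.IsSymm])) fun w hw => ?_
      have h0 : 0 ≤ w ⬝ᵥ (D t *ᵥ w) + g t := by
        refine ge_of_tendsto (hderiv w).continuousWithinAt ?_
        filter_upwards [self_mem_nhdsWithin] with s hs using (hpos s hs w hw).le
      simpa [add_mulVec, smul_mulVec, hw] using h0
    have hq0 : v ⬝ᵥ ((D t + g t • (1 : Matrix (Fin n) (Fin n) ℝ)) *ᵥ v) = 0 := by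
      have h0 := hE.dotProduct_mulVec_nonneg v
      rw [star_trivial] at h0
      refine le_antisymm ?_ h0
      simpa [add_mulVec, smul_mulVec, hv1] using hqtv'
    have hker : D t *ᵥ v = -(g t • v) := by
      have h := (hE.dotProduct_mulVec_zero_iff v).mp (by rw [star_trivial]; exact hq0)
      rw [add_mulVec, smul_mulVec, one_mulVec] at h
      exact eq_neg_of_add_eq_zero_left h
    have hft : v ⬝ᵥ (D t *ᵥ v) + g t = 0 := by
      rw [hker]; simp [hv1]
    have hnn : 0 ≤ v ⬝ᵥ ((-(S t * D t + D t * S t + P t)) *ᵥ v) + -(K * g t) := by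
      refine ge_of_tendsto ((hasDerivWithinAt_iff_tendsto_slope' (by simp)).mp (hderiv v)) ?_
      filter_upwards [self_mem_nhdsWithin] with s hs
      rw [slope_def_field, hft, sub_zero]
      exact div_nonneg (hpos s hs v hv1).le (sub_nonneg.mpr hs.1.le)
    have e1 : v ⬝ᵥ ((S t * D t) *ᵥ v) = -(g t * (v ⬝ᵥ (S t *ᵥ v))) := by
      rw [← mulVec_mulVec, hker]; simp [mulVec_neg, mulVec_smul]
    have e2 : v ⬝ᵥ ((D t * S t) *ᵥ v) = -(g t * (v ⬝ᵥ (S t *ᵥ v))) := by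
      rw [← mulVec_mulVec, dotProduct_mulVec, ← mulVec_transpose, (hDs t ht).eq, hker]
      simp
    have hPv := (hP t ht).dotProduct_mulVec_nonneg v
    rw [star_trivial] at hPv
    rw [neg_mulVec, add_mulVec, add_mulVec, dotProduct_neg, dotProduct_add, dotProduct_add,
      e1, e2] at hnn
    have := mul_le_mul_of_nonneg_left (hC' t ht v hv1) (hgpos t).le
    have hp := hgpos t
    rw [hK] at hnn
    nlinarith
  refine aux_psd_of_unit (hDs a (left_mem_Icc.mpr hab)) fun v hv => ?_
  by_contra! hneg
  have hep := Real.exp_pos (K * (b - a))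
  have := key (-(v ⬝ᵥ (D a *ᵥ v)) / Real.exp (K * (b - a))) (div_pos (by linarith) hep) v hv
  rw [div_mul_cancel₀ _ hep.ne'] at this
  linarith

theorem aux_pair {n : ℕ} {c b : ℝ} {R Q H G : ℝ → Matrix (Fin n) (Fin n) ℝ}
    (hHs : ∀ t ∈ Ioc c b, (H t).IsSymm) (hGs : ∀ t ∈ Ioc c b, (G t).IsSymm)
    (hRQ : ∀ t ∈ Ioc c b, (R t - Q t).PosSemidef)
    (hH : ∀ t ∈ Ioc c b, ∀ i j,
      HasDerivWithinAt (fun s => H s i j) (-(H t * H t + R t) i j) (Ioc c b) t)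
    (hG : ∀ t ∈ Ioc c b, ∀ i j,
      HasDerivWithinAt (fun s => G s i j) (-(G t * G t + Q t) i j) (Ioc c b) t)
    (hend : (H b - G b).PosSemidef) : ∀ t ∈ Ioc c b, (H t - G t).PosSemidef := by
  intro a ha
  have hsub : Icc a b ⊆ Ioc c b := fun s hs => ⟨ha.1.trans_le hs.1, hs.2⟩
  refine aux_core (D := fun t => H t - G t) (S := fun t => (1 / 2 : ℝ) • (H t + G t))
    (P := fun t => R t - Q t) ha.2 (fun t ht => (hHs t (hsub ht)).sub (hGs t (hsub ht)))
    (fun t ht => hRQ t (hsub ht)) ?_ ?_ hend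
  · intro i j t ht
    have h1 := ((hH t (hsub ht) i j).mono hsub).continuousWithinAt
    have h2 := ((hG t (hsub ht) i j).mono hsub).continuousWithinAt
    exact (h1.add h2).const_smul (1 / 2 : ℝ)
  · intro t ht i j
    have h := ((hH t (hsub ht) i j).mono hsub).sub ((hG t (hsub ht) i j).mono hsub)
    refine h.congr_deriv ?_
    have e : (1 / 2 : ℝ) • (H t + G t) * (H t - G t) + (H t - G t) * (1 / 2 : ℝ) • (H t + G t)
        = H t * H t - G t * G t := by
      rw [smul_mul_assoc, mul_smul_comm, ← smul_add]
      have : (H t + G t) * (H t - G t) + (H t - G t) * (H t + G t)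
          = (2 : ℝ) • (H t * H t - G t * G t) := by
        rw [two_smul]; noncomm_ring
      rw [this, smul_smul]; norm_num
    simp only [e]
    simp only [Matrix.neg_apply, Matrix.add_apply, Matrix.sub_apply]
    ring

/-- Backwards matrix Riccati comparison: if `R₁ ≤ R ≤ R₂` in the Loewner
order, `H, H₁, H₂` solve the respective Riccati equations `Hᵢ' + Hᵢ² + Rᵢ = 0` on
`(t*, ε]`, and `H₁(ε) ≤ H(ε) ≤ H₂(ε)`, then `H₁(t) ≤ H(t) ≤ H₂(t)` on `(t*, ε]`. -/
theorem stmt_7 (n : ℕ) (hn : 1 ≤ n) (tstar ε : ℝ) (htstar : 0 ≤ tstar) (hε : tstar < ε)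
    (R R₁ R₂ H H₁ H₂ : ℝ → Matrix (Fin n) (Fin n) ℝ)
    (hRsymm : ∀ t ∈ Set.Ioc tstar ε, (R t).IsSymm ∧ (R₁ t).IsSymm ∧ (R₂ t).IsSymm)
    (hHsymm : ∀ t ∈ Set.Ioc tstar ε, (H t).IsSymm ∧ (H₁ t).IsSymm ∧ (H₂ t).IsSymm)
    (hcont : ∀ i j, ContinuousOn (fun t => R t i j) (Set.Ioc tstar ε) ∧
      ContinuousOn (fun t => R₁ t i j) (Set.Ioc tstar ε) ∧
      ContinuousOn (fun t => R₂ t i j) (Set.Ioc tstar ε))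
    (horder : ∀ t ∈ Set.Ioc tstar ε, (R t - R₁ t).PosSemidef ∧ (R₂ t - R t).PosSemidef)
    (hH : ∀ t ∈ Set.Ioc tstar ε, ∀ i j,
      HasDerivWithinAt (fun s => H s i j) (-(H t * H t + R t) i j) (Set.Ioc tstar ε) t)
    (hH₁ : ∀ t ∈ Set.Ioc tstar ε, ∀ i j,
      HasDerivWithinAt (fun s => H₁ s i j) (-(H₁ t * H₁ t + R₁ t) i j) (Set.Ioc tstar ε) t)
    (hH₂ : ∀ t ∈ Set.Ioc tstar ε, ∀ i j,
      HasDerivWithinAt (fun s => H₂ s i j) (-(H₂ t * H₂ t + R₂ t) i j) (Set.Ioc tstar ε) t)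
    (hend : (H ε - H₁ ε).PosSemidef ∧ (H₂ ε - H ε).PosSemidef) :
    ∀ t ∈ Set.Ioc tstar ε, (H t - H₁ t).PosSemidef ∧ (H₂ t - H t).PosSemidef := by
  have h1 := aux_pair (fun t ht => (hHsymm t ht).1) (fun t ht => (hHsymm t ht).2.1)
    (fun t ht => (horder t ht).1) hH hH₁ hend.1
  have h2 := aux_pair (fun t ht => (hHsymm t ht).2.2) (fun t ht => (hHsymm t ht).1)
    (fun t ht => (horder t ht).2) hH₂ hH hend.2
  exact fun t ht => ⟨h1 t ht, h2 t ht⟩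
end

section
/- Let n ≥ 1, let u : ℝⁿ → ℂ be smooth with compact support, and let f : ℝⁿ → ℝ be continuously differentiable. Then ∫_{ℝⁿ} |∇(fu)|² dx = Re ∫_{ℝⁿ} Σⱼ ∂ⱼu · conj(∂ⱼ(f² u)) dx + ∫_{ℝⁿ} |∇f|² |u|² dx, where ∂ⱼ denotes the j-th partial derivative, ∇g = (∂₁g, …, ∂ₙg), |∇(fu)|² = Σⱼ |∂ⱼ(fu)|², and conj denotes complex conjugation. -/
open MeasureTheory

/-- Euclidean case of the key algebraic identity for the Dirichlet form:
for real-valued `C¹` `f` and smooth compactly supported `u : ℝⁿ → ℂ`,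
`∫ |∇(fu)|² = Re ∫ Σⱼ ∂ⱼu ⬝ conj(∂ⱼ(f²u)) + ∫ |∇f|² |u|²`. -/
theorem stmt_9 (n : ℕ) (hn : 1 ≤ n) (u : (Fin n → ℝ) → ℂ) (hu : ContDiff ℝ (⊤ : ℕ∞) u)
    (hcs : HasCompactSupport u) (f : (Fin n → ℝ) → ℝ) (hf : ContDiff ℝ 1 f) :
    ∫ x, ∑ j, ‖fderiv ℝ (fun y => (f y : ℂ) * u y) x (Pi.single j 1)‖ ^ 2 =
      (∫ x, ∑ j, fderiv ℝ u x (Pi.single j 1) *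
          (starRingEnd ℂ)
            (fderiv ℝ (fun y => ((f y : ℂ)) ^ 2 * u y) x (Pi.single j 1))).re +
        ∫ x, (∑ j, fderiv ℝ f x (Pi.single j 1) ^ 2) * ‖u x‖ ^ 2 := by
  have hu1 : ContDiff ℝ 1 u := hu.of_le (by exact_mod_cast le_top)
  have hfc : ContDiff ℝ 1 (fun y => (f y : ℂ)) := Complex.ofRealCLM.contDiff.comp hf
  have hg : ContDiff ℝ 1 (fun y => ((f y : ℂ)) ^ 2 * u y) := (hfc.pow 2).mul hu1
  have hdf : ∀ x, HasFDerivAt (fun y => (f y : ℂ))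
      (Complex.ofRealCLM.comp (fderiv ℝ f x)) x := fun x =>
    Complex.ofRealCLM.hasFDerivAt.comp x ((hf.differentiable one_ne_zero) x).hasFDerivAt
  have hdu : ∀ x, HasFDerivAt u (fderiv ℝ u x) x := fun x =>
    ((hu1.differentiable one_ne_zero) x).hasFDerivAt
  have h1 : ∀ x v, fderiv ℝ (fun y => (f y : ℂ) * u y) x v =
      f x * fderiv ℝ u x v + u x * (fderiv ℝ f x v : ℝ) := by
    intro x v
    have e : (fun y => (f y : ℂ) * u y) = (fun y => (f y : ℂ)) * u := rfl
    rw [e, ((hdf x).mul (hdu x)).fderiv]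
    simp
  have h2 : ∀ x v, fderiv ℝ (fun y => (f y : ℂ) ^ 2 * u y) x v =
      (f x : ℂ) ^ 2 * fderiv ℝ u x v + u x * (2 * f x * (fderiv ℝ f x v : ℝ)) := by
    intro x v
    have := (((hdf x).mul (hdf x)).mul (hdu x)).fderiv
    have e : (fun y => (f y : ℂ) ^ 2 * u y) = (fun y => (f y : ℂ)) * (fun y => (f y : ℂ)) * u := by
      funext y; simp [pow_two]
    rw [e, this]
    simp
    ring
  have cdu : ∀ v, Continuous fun x => fderiv ℝ u x v := fun v =>
    (hu1.continuous_fderiv one_ne_zero).clm_apply continuous_const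
  have cdf : ∀ v, Continuous fun x => fderiv ℝ f x v := fun v =>
    (hf.continuous_fderiv one_ne_zero).clm_apply continuous_const
  have cdg : ∀ v, Continuous fun x => fderiv ℝ (fun y => ((f y : ℂ)) ^ 2 * u y) x v := fun v =>
    (hg.continuous_fderiv one_ne_zero).clm_apply continuous_const
  have I1 : Integrable (fun x => ∑ j : Fin n, fderiv ℝ u x (Pi.single j 1) *
          (starRingEnd ℂ)
            (fderiv ℝ (fun y => ((f y : ℂ)) ^ 2 * u y) x (Pi.single j 1))) := by
    refine integrable_finsetSum _ fun j _ => ?_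
    refine Continuous.integrable_of_hasCompactSupport
      ((cdu _).mul (Complex.continuous_conj.comp (cdg _))) ?_
    exact (hcs.fderiv_apply (𝕜 := ℝ) (Pi.single j 1)).mul_right
  have I2 : Integrable (fun x => (∑ j : Fin n, fderiv ℝ f x (Pi.single j 1) ^ 2) * ‖u x‖ ^ 2) := by
    refine Continuous.integrable_of_hasCompactSupport
      ((continuous_finsetSum _ fun j _ => (cdf _).pow 2).mul (hu.continuous.norm.pow 2)) ?_
    refine HasCompactSupport.mul_left ?_
    exact hcs.comp_left (g := fun z : ℂ => ‖z‖ ^ 2) (by simp)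
  have hre := Complex.reCLM.integral_comp_comm I1
  simp only [Complex.reCLM_apply] at hre
  have I1' := Complex.reCLM.integrable_comp I1
  simp only [Complex.reCLM_apply] at I1'
  rw [← hre, ← integral_add I1' I2]
  congr 1
  funext x
  rw [Complex.re_sum, Finset.sum_mul, ← Finset.sum_add_distrib]
  refine Finset.sum_congr rfl fun j _ => ?_
  rw [h1, h2, ← Complex.normSq_eq_norm_sq, ← Complex.normSq_eq_norm_sq]
  generalize fderiv ℝ u x (Pi.single j 1) = a
  generalize fderiv ℝ f x (Pi.single j 1) = b
  simp [Complex.normSq_apply, pow_two]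
  ring
end
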